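/- Let (H,d) be a Hadamard space and f : H → (−∞,∞] a proper convex lower semicontinuous function that attains its minimum on H. Then for every starting point x in the closure of dom f, the gradient flow S_t x weakly converges, as t → ∞, to a minimizer of f. -/

import Mathlib

open Filter Topology
open scoped Classical

/-- `γ`, restricted to `[0,1]`, is an affinely parametrized geodesic. -/
def IsGeodesic {H : Type*} [MetricSpace H] (γ : ℝ → H) : Prop :=
  ∀ s ∈ Set.Icc (0:ℝ) 1, ∀ t ∈ Set.Icc (0:ℝ) 1,
    dist (γ s) (γ t) = |s - t| * dist (γ 0) (γ 1)

/-- A Hadamard space: a complete geodesic metric space satisfying the CAT(0) inequality. -/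
structure HadamardSpace (H : Type*) [MetricSpace H] [CompleteSpace H] : Prop where
  geodesic : ∀ x y : H, ∃ γ : ℝ → H, IsGeodesic γ ∧ γ 0 = x ∧ γ 1 = y
  cat0 : ∀ (x : H) (γ : ℝ → H), IsGeodesic γ → ∀ t ∈ Set.Icc (0:ℝ) 1,
      dist x (γ t) ^ 2 ≤ (1 - t) * dist x (γ 0) ^ 2 + t * dist x (γ 1) ^ 2
        - t * (1 - t) * dist (γ 0) (γ 1) ^ 2

/-- A set is (geodesically) convex if it contains every geodesic segment between its points. -/
def GeodesicConvex {H : Type*} [MetricSpace H] (C : Set H) : Prop :=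
  ∀ γ : ℝ → H, IsGeodesic γ → γ 0 ∈ C → γ 1 ∈ C → ∀ t ∈ Set.Icc (0:ℝ) 1, γ t ∈ C

/-- A function `f : H → (−∞,∞]` is convex if it is convex along every geodesic. -/
def ConvexFun {H : Type*} [MetricSpace H] (f : H → EReal) : Prop :=
  ∀ γ : ℝ → H, IsGeodesic γ → ∀ t ∈ Set.Icc (0:ℝ) 1,
    f (γ t) ≤ ((1 - t : ℝ) : EReal) * f (γ 0) + ((t : ℝ) : EReal) * f (γ 1)

/-- `f` is strongly convex with parameter `β > 0`. -/
def StronglyConvexWith {H : Type*} [MetricSpace H] (β : ℝ) (f : H → EReal) : Prop :=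
  ∀ γ : ℝ → H, IsGeodesic γ → ∀ t ∈ Set.Icc (0:ℝ) 1,
    f (γ t) ≤ ((1 - t : ℝ) : EReal) * f (γ 0) + ((t : ℝ) : EReal) * f (γ 1)
      - ((β * (t * (1 - t)) * dist (γ 0) (γ 1) ^ 2 : ℝ) : EReal)

/-- `f : H → (−∞,∞]` is proper (not identically `∞`, never `−∞`), convex and lsc. -/
def ProperConvexLsc {H : Type*} [MetricSpace H] (f : H → EReal) : Prop :=
  (∃ x, f x ≠ ⊤) ∧ (∀ x, f x ≠ ⊥) ∧ ConvexFun f ∧ LowerSemicontinuous f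

/-- `c` is an asymptotic center of the (bounded) sequence `x`:
it minimizes `y ↦ limsup_n d(y, x_n)²`. -/
def IsAsymptoticCenter {H : Type*} [MetricSpace H] (x : ℕ → H) (c : H) : Prop :=
  ∀ y : H, limsup (fun n => dist c (x n) ^ 2) atTop ≤ limsup (fun n => dist y (x n) ^ 2) atTop

/-- `x` weakly converges to `c` if `c` is the asymptotic center of every subsequence of `x`. -/
def WeakConvSeq {H : Type*} [MetricSpace H] (x : ℕ → H) (c : H) : Prop :=
  ∀ φ : ℕ → ℕ, StrictMono φ → IsAsymptoticCenter (x ∘ φ) c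

/-- Mosco convergence of `fn` to `f`. -/
def MoscoConv {H : Type*} [MetricSpace H] (fn : ℕ → H → EReal) (f : H → EReal) : Prop :=
  (∀ (x : H) (xs : ℕ → H), Bornology.IsBounded (Set.range xs) → WeakConvSeq xs x →
      f x ≤ liminf (fun n => fn n (xs n)) atTop) ∧
  (∀ x : H, ∃ ys : ℕ → H, Tendsto ys atTop (𝓝 x) ∧
      Tendsto (fun n => fn n (ys n)) atTop (𝓝 (f x)))

/-- `p` is the resolvent `J_λ x` of `f` at `x`: it minimizes `y ↦ f(y) + d(x,y)²/(2λ)`. -/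
def IsResolventPt {H : Type*} [MetricSpace H] (f : H → EReal) (lam : ℝ) (x p : H) : Prop :=
  ∀ y : H, f p + ((dist x p ^ 2 / (2 * lam) : ℝ) : EReal)
    ≤ f y + ((dist x y ^ 2 / (2 * lam) : ℝ) : EReal)

/-- The Moreau–Yosida envelope `f_λ(x) = inf_y [f(y) + d(x,y)²/(2λ)]`. -/
noncomputable def MoreauEnv {H : Type*} [MetricSpace H] (f : H → EReal) (lam : ℝ) (x : H) :
    EReal :=
  ⨅ y : H, f y + ((dist x y ^ 2 / (2 * lam) : ℝ) : EReal)

/-- `p` is the metric projection of `x` onto `C`. -/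
def IsProjPt {H : Type*} [MetricSpace H] (C : Set H) (x p : H) : Prop :=
  p ∈ C ∧ ∀ c ∈ C, dist x p ≤ dist x c

/-- The indicator function of a set, with values in `(−∞,∞]`. -/
noncomputable def indicatorE {H : Type*} (C : Set H) : H → EReal :=
  fun x => if x ∈ C then (0 : EReal) else ⊤

/-- `y = S_t x` is the gradient-flow semigroup value:
the limit of the iterated resolvents `(J_{t/n})^{(n)} x`. -/
def IsGradientFlowPt {H : Type*} [MetricSpace H] (J : ℝ → H → H) (t : ℝ) (x y : H) : Prop :=
  Tendsto (fun n : ℕ => (J (t / (n : ℝ)))^[n] x) atTop (𝓝 y)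

/-!
Comparing `J_λ x` with the points of a geodesic from `J_λ x` to `y` gives the discrete evolution
variational inequality `d(J_λ x, y)² + d(x, J_λ x)² + 2λ (f(J_λ x) - f(y)) ≤ d(x, y)²`, from which
everything else follows. Used against iterates of a second resolvent, it bounds the distance between
two discretizations of the flow, so the exponential formula converges and the flow is `1/2`-Hölder
in time on `dom f`. Used against a minimizer `m`, it shows that `d(S_t x, m)` is nonincreasing in
`t` and that `S_t x` is a limit of points where `f ≤ min f + d(x, m)² / (2t)`. Used at an asymptotic
center `c` of `(S_{t_n} x)` with `y` running along the sequence, it forces `J_1 c = c` and makes `c`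
a minimizer. Opial's lemma then upgrades convergence of the distances to the minimizers to weak
convergence.
-/

section CompleteMetric

variable {X : Type*} [PseudoMetricSpace X]

lemma cauchySeq_of_mem_closure {Y : Type*} [PseudoMetricSpace Y] {F : ℕ → X → Y} {K : NNReal}
    (hF : ∀ n, LipschitzWith K (F n)) {D : Set X} (hD : ∀ x ∈ D, CauchySeq fun n => F n x) {x : X}
    (hx : x ∈ closure D) : CauchySeq fun n => F n x := by
  rw [Metric.cauchySeq_iff]
  intro ε hε
  obtain ⟨x', hx', hdist⟩ := Metric.mem_closure_iff.1 hx (ε / (4 * (K + 1))) (by positivity)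
  obtain ⟨N, hN⟩ := Metric.cauchySeq_iff.1 (hD x' hx') (ε / 2) (by positivity)
  have hclose : ∀ n, dist (F n x) (F n x') ≤ ε / 4 := fun n => by
    rw [lt_div_iff₀ (by positivity)] at hdist
    linarith [(hF n).dist_le_mul x x', dist_nonneg (x := x) (y := x')]
  refine ⟨N, fun i hi j hj => ?_⟩
  linarith [dist_triangle4_right (F i x) (F j x) (F i x') (F j x'), hclose i, hclose j,
    hN i hi j hj]

lemma exists_forall_le_of_midpoint_le [CompleteSpace X] [Nonempty X] {ω : X → ℝ}
    (hcont : Continuous ω) (hbdd : BddBelow (Set.range ω))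
    (hmid : ∀ a b, ∃ c, ω c ≤ ω a / 2 + ω b / 2 - dist a b ^ 2 / 4) :
    ∃ c, ∀ y, ω c ≤ ω y := by
  have hinf : ∀ y, sInf (Set.range ω) ≤ ω y := fun y => csInf_le hbdd ⟨y, rfl⟩
  obtain ⟨r, -, hr, hrange⟩ := exists_seq_tendsto_sInf (Set.range_nonempty ω) hbdd
  choose v hv using hrange
  obtain rfl : ω ∘ v = r := funext hv
  have hdist : ∀ i j, dist (v i) (v j) ^ 2 ≤
      2 * (ω (v i) - sInf (Set.range ω)) + 2 * (ω (v j) - sInf (Set.range ω)) := fun i j => by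
    obtain ⟨c, hc⟩ := hmid (v i) (v j)
    linarith [hinf c]
  have hcauchy : CauchySeq v := by
    rw [Metric.cauchySeq_iff]
    intro ε hε
    obtain ⟨N, hN⟩ := eventually_atTop.1 (hr.eventually_lt_const
      (lt_add_of_pos_right _ (by positivity : 0 < ε ^ 2 / 4)))
    refine ⟨N, fun i hi j hj => lt_of_pow_lt_pow_left₀ 2 hε.le ?_⟩
    have hi' := hN i hi
    have hj' := hN j hj
    simp only [Function.comp_apply] at hi' hj'
    linarith [hdist i j]
  obtain ⟨c, hc⟩ := cauchySeq_tendsto_of_complete hcauchy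
  have hωc : ω c = sInf (Set.range ω) := tendsto_nhds_unique ((hcont.tendsto c).comp hc) hr
  exact ⟨c, fun y => hωc ▸ hinf y⟩

end CompleteMetric

section AsymptoticCenter

variable {H : Type*} [PseudoMetricSpace H] {u : ℕ → H} {y : H}

/-- The function `ω(y) = limsup_n d(y, u n)²` whose minimizers are the asymptotic centers of `u`.
It is real-valued, hence meaningful for bounded `u` only. -/
noncomputable def asymptoticFun (u : ℕ → H) (y : H) : ℝ :=
  limsup (fun n => dist y (u n) ^ 2) atTop

lemma asymptoticFun_le_iff (hu : Bornology.IsBounded (Set.range u)) {a : ℝ} :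
    asymptoticFun u y ≤ a ↔ ∀ b > a, ∀ᶠ n in atTop, dist y (u n) ^ 2 < b := by
  refine limsup_le_iff ?_ ?_
  · exact IsBoundedUnder.isCoboundedUnder_le (isBoundedUnder_of ⟨0, fun _ => sq_nonneg _⟩)
  · obtain ⟨r, hr⟩ := hu.subset_closedBall y
    refine isBoundedUnder_of ⟨r ^ 2, fun n => ?_⟩
    have hn : dist y (u n) ≤ r := dist_comm (u n) y ▸ hr ⟨n, rfl⟩
    gcongr

lemma eventually_dist_sq_lt (hu : Bornology.IsBounded (Set.range u)) {b : ℝ}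
    (hb : asymptoticFun u y < b) : ∀ᶠ n in atTop, dist y (u n) ^ 2 < b :=
  (asymptoticFun_le_iff hu).1 le_rfl b hb

lemma asymptoticFun_nonneg (hu : Bornology.IsBounded (Set.range u)) (y : H) :
    0 ≤ asymptoticFun u y := by
  by_contra! hneg
  obtain ⟨n, hn⟩ := (eventually_dist_sq_lt hu hneg).exists
  exact hn.not_ge (sq_nonneg _)

lemma asymptoticFun_eq_of_tendsto_dist {r : ℝ}
    (h : Tendsto (fun n => dist y (u n)) atTop (𝓝 r)) : asymptoticFun u y = r ^ 2 :=
  (h.pow 2).limsup_eq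

lemma isBounded_range_of_tendsto_dist {r : ℝ}
    (h : Tendsto (fun n => dist y (u n)) atTop (𝓝 r)) : Bornology.IsBounded (Set.range u) := by
  obtain ⟨R, hR⟩ := h.bddAbove_range
  refine (Metric.isBounded_closedBall (x := y) (r := R)).subset ?_
  rintro _ ⟨n, rfl⟩
  exact Metric.mem_closedBall'.2 (hR ⟨n, rfl⟩)

lemma lipschitzWith_sqrt_asymptoticFun (hu : Bornology.IsBounded (Set.range u)) :
    LipschitzWith 1 fun y => √(asymptoticFun u y) := by
  refine LipschitzWith.of_le_add fun y z => le_of_forall_gt_imp_ge_of_dense fun r hr => ?_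
  have hzr : √(asymptoticFun u z) < r - dist y z := lt_sub_iff_add_lt.2 hr
  have hr0 : 0 < r - dist y z := (Real.sqrt_nonneg _).trans_lt hzr
  refine Real.sqrt_le_iff.2 ⟨by linarith [dist_nonneg (x := y) (y := z)],
    (asymptoticFun_le_iff hu).2 fun b hb => ?_⟩
  filter_upwards [eventually_dist_sq_lt hu ((Real.sqrt_lt' hr0).1 hzr)] with n hn
  have hzn : dist z (u n) < r - dist y z := lt_of_pow_lt_pow_left₀ 2 hr0.le hn
  have hyn : dist y (u n) ≤ r := by linarith [dist_triangle y z (u n)]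
  exact (pow_le_pow_left₀ dist_nonneg hyn 2).trans_lt hb

lemma continuous_asymptoticFun (hu : Bornology.IsBounded (Set.range u)) :
    Continuous (asymptoticFun u) :=
  ((lipschitzWith_sqrt_asymptoticFun hu).continuous.pow 2).congr fun y =>
    Real.sq_sqrt (asymptoticFun_nonneg hu y)

end AsymptoticCenter

namespace HadamardSpace

variable {H : Type*} [MetricSpace H] [CompleteSpace H]

lemma exists_midpoint (hH : HadamardSpace H) (a b : H) :
    ∃ c, ∀ x, dist x c ^ 2 ≤ dist x a ^ 2 / 2 + dist x b ^ 2 / 2 - dist a b ^ 2 / 4 := by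
  obtain ⟨γ, hγ, rfl, rfl⟩ := hH.geodesic a b
  refine ⟨γ (1 / 2), fun x => ?_⟩
  linarith [hH.cat0 x γ hγ (1 / 2) ⟨by norm_num, by norm_num⟩]

lemma sq_dist_diagonals_le_sq_dist_sides (hH : HadamardSpace H) (x y p q : H) :
    dist x q ^ 2 + dist y p ^ 2 ≤
      dist x p ^ 2 + dist y q ^ 2 + dist x y ^ 2 + dist p q ^ 2 := by
  obtain ⟨c, hc⟩ := hH.exists_midpoint x q
  have hy := hc y
  have hp := hc p
  have hyp : dist y p ^ 2 ≤ 2 * dist y c ^ 2 + 2 * dist p c ^ 2 := by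
    have := pow_le_pow_left₀ dist_nonneg (dist_triangle_right y p c) 2
    linarith [sq_nonneg (dist y c - dist p c)]
  rw [dist_comm y x] at hy
  rw [dist_comm p x] at hp
  linarith

lemma exists_isAsymptoticCenter (hH : HadamardSpace H) {u : ℕ → H}
    (hu : Bornology.IsBounded (Set.range u)) : ∃ c, IsAsymptoticCenter u c := by
  have : Nonempty H := ⟨u 0⟩
  refine exists_forall_le_of_midpoint_le (ω := asymptoticFun u)
    (continuous_asymptoticFun hu) ⟨0, Set.forall_mem_range.2 (asymptoticFun_nonneg hu)⟩
    fun a b => ?_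
  obtain ⟨c, hc⟩ := hH.exists_midpoint a b
  refine ⟨c, (asymptoticFun_le_iff hu).2 fun r hr => ?_⟩
  filter_upwards [eventually_dist_sq_lt (y := a) hu (lt_add_of_pos_right _ (sub_pos.2 hr)),
    eventually_dist_sq_lt (y := b) hu (lt_add_of_pos_right _ (sub_pos.2 hr))] with n ha hb
  have := hc (u n)
  simp only [dist_comm (u n)] at this
  linarith

/-- Opial's lemma in a Hadamard space. -/
lemma exists_forall_weakConvSeq_of_tendsto_dist (hH : HadamardSpace H) {α : Type*} {l : Filter α}
    [l.NeBot] [l.IsCountablyGenerated] {u : α → H} {F : Set H} (hF : F.Nonempty)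
    (hlim : ∀ z ∈ F, ∃ r, Tendsto (fun a => dist z (u a)) l (𝓝 r))
    (hcenter : ∀ s : ℕ → α, Tendsto s atTop l → ∀ c, IsAsymptoticCenter (u ∘ s) c → c ∈ F) :
    ∃ c ∈ F, ∀ s : ℕ → α, Tendsto s atTop l →
      Bornology.IsBounded (Set.range (u ∘ s)) ∧ WeakConvSeq (u ∘ s) c := by
  have hbdd : ∀ s : ℕ → α, Tendsto s atTop l → Bornology.IsBounded (Set.range (u ∘ s)) := by
    obtain ⟨z, hz⟩ := hF
    obtain ⟨r, hr⟩ := hlim z hz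
    exact fun s hs => isBounded_range_of_tendsto_dist (hr.comp hs)
  have hasymp : ∀ s s' : ℕ → α, Tendsto s atTop l → Tendsto s' atTop l → ∀ z ∈ F,
      asymptoticFun (u ∘ s) z = asymptoticFun (u ∘ s') z := fun s s' hs hs' z hz => by
    obtain ⟨r, hr⟩ := hlim z hz
    exact (asymptoticFun_eq_of_tendsto_dist (hr.comp hs)).trans
      (asymptoticFun_eq_of_tendsto_dist (hr.comp hs')).symm
  obtain ⟨s₀, hs₀⟩ := l.exists_seq_tendsto
  obtain ⟨c, hc⟩ := hH.exists_isAsymptoticCenter (hbdd s₀ hs₀)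
  have hcF : c ∈ F := hcenter s₀ hs₀ c hc
  refine ⟨c, hcF, fun s hs => ⟨hbdd s hs, fun φ hφ y => ?_⟩⟩
  have hsφ : Tendsto (s ∘ φ) atTop l := hs.comp hφ.tendsto_atTop
  obtain ⟨c', hc'⟩ := hH.exists_isAsymptoticCenter (hbdd (s ∘ φ) hsφ)
  have hcF' : c' ∈ F := hcenter _ hsφ c' hc'
  calc asymptoticFun (u ∘ s ∘ φ) c
      = asymptoticFun (u ∘ s₀) c := hasymp _ _ hsφ hs₀ c hcF
    _ ≤ asymptoticFun (u ∘ s₀) c' := hc c'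
    _ = asymptoticFun (u ∘ s ∘ φ) c' := hasymp _ _ hs₀ hsφ c' hcF'
    _ ≤ asymptoticFun (u ∘ s ∘ φ) y := hc' y

end HadamardSpace

section GradientFlow

variable {H : Type*} [MetricSpace H] {J : ℝ → H → H}

lemma lipschitzWith_one_iterate_div (hJ : ∀ l > 0, LipschitzWith 1 (J l)) {t : ℝ} (ht : 0 < t)
    (n : ℕ) : LipschitzWith 1 (J (t / n))^[n] := by
  rcases n.eq_zero_or_pos with rfl | hn
  · exact LipschitzWith.id
  · simpa using (hJ (t / n) (by positivity)).iterate n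

lemma IsGradientFlowPt.dist_le_dist (hJ : ∀ l > 0, LipschitzWith 1 (J l)) {t : ℝ} (ht : 0 < t)
    {x x' y y' : H} (hy : IsGradientFlowPt J t x y) (hy' : IsGradientFlowPt J t x' y') :
    dist y y' ≤ dist x x' :=
  le_of_tendsto' (hy.dist hy') fun n => by
    simpa using (lipschitzWith_one_iterate_div hJ ht n).dist_le_mul x x'

lemma IsGradientFlowPt.tendsto_of_tendsto (hJ : ∀ l > 0, LipschitzWith 1 (J l)) {t : ℝ}
    (ht : 0 < t) {x y : H} {x' y' : ℕ → H} (hx' : Tendsto x' atTop (𝓝 x))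
    (hy' : ∀ n, IsGradientFlowPt J t (x' n) (y' n)) (hy : IsGradientFlowPt J t x y) :
    Tendsto y' atTop (𝓝 y) :=
  tendsto_iff_dist_tendsto_zero.2 <| squeeze_zero (fun _ => dist_nonneg)
    (fun n => (hy' n).dist_le_dist hJ ht hy) (tendsto_iff_dist_tendsto_zero.1 hx')

lemma IsGradientFlowPt.tendsto_iterate_mul {τ : ℝ} {x y : H} {k : ℕ} (hk : 0 < k)
    (hy : IsGradientFlowPt J (k * τ) x y) :
    Tendsto (fun n : ℕ => (J (τ / n))^[k * n] x) atTop (𝓝 y) := by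
  refine (hy.comp (tendsto_id.const_mul_atTop' hk)).congr fun n => ?_
  have hstep : k * τ / (k * n : ℕ) = τ / n := by
    push_cast
    exact mul_div_mul_left _ _ (by positivity)
  simp only [Function.comp_apply, id_eq, hstep]

end GradientFlow

/-- The map `J` satisfies the discrete evolution variational inequality (EVI) for the real-valued
function `g` with effective domain `D`. Extended-valued functions are encoded by the pair `D`, `g`
so that the estimates take place in `ℝ`. -/
structure IsEVIResolvent {H : Type*} [MetricSpace H] (D : Set H) (g : H → ℝ) (J : ℝ → H → H) :
    Prop where
  mem : ∀ l > 0, ∀ x, J l x ∈ D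
  evi : ∀ l > 0, ∀ x, ∀ y ∈ D,
    dist (J l x) y ^ 2 + dist x (J l x) ^ 2 + 2 * l * (g (J l x) - g y) ≤ dist x y ^ 2

namespace IsEVIResolvent

variable {H : Type*} [MetricSpace H] {D : Set H} {g : H → ℝ} {J : ℝ → H → H}
  {l t b : ℝ} {x m : H}

lemma lipschitzWith_one [CompleteSpace H] (h : IsEVIResolvent D g J) (hH : HadamardSpace H)
    (hl : 0 < l) : LipschitzWith 1 (J l) := by
  refine LipschitzWith.of_dist_le_mul fun x y => ?_
  rw [NNReal.coe_one, one_mul]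
  refine le_of_sq_le_sq ?_ dist_nonneg
  have hx := h.evi l hl x _ (h.mem l hl y)
  have hy := h.evi l hl y _ (h.mem l hl x)
  rw [dist_comm (J l y)] at hy
  linarith [hH.sq_dist_diagonals_le_sq_dist_sides x y (J l x) (J l y)]

lemma apply_le (h : IsEVIResolvent D g J) (hl : 0 < l) (hx : x ∈ D) : g (J l x) ≤ g x := by
  have hevi := h.evi l hl x x hx
  rw [dist_self] at hevi
  have : 2 * l * (g (J l x) - g x) ≤ 0 := by
    linarith [sq_nonneg (dist (J l x) x), sq_nonneg (dist x (J l x))]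
  linarith [nonpos_of_mul_nonpos_right this (by positivity)]

lemma dist_apply_le (h : IsEVIResolvent D g J) (hl : 0 < l) (x : H) (hm : m ∈ D)
    (hmin : ∀ y ∈ D, g m ≤ g y) : dist (J l x) m ≤ dist x m := by
  refine le_of_sq_le_sq ?_ dist_nonneg
  have hgap : 0 ≤ 2 * l * (g (J l x) - g m) :=
    mul_nonneg (by positivity) (sub_nonneg.2 (hmin _ (h.mem l hl x)))
  linarith [h.evi l hl x m hm, sq_nonneg (dist x (J l x))]

lemma iterate_mem_of_pos (h : IsEVIResolvent D g J) (hl : 0 < l) (x : H) {k : ℕ} (hk : 0 < k) :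
    (J l)^[k] x ∈ D := by
  obtain ⟨j, rfl⟩ := Nat.exists_eq_add_one.2 hk
  rw [Function.iterate_succ_apply']
  exact h.mem l hl _

lemma iterate_mem (h : IsEVIResolvent D g J) (hl : 0 < l) (hx : x ∈ D) (k : ℕ) :
    (J l)^[k] x ∈ D := by
  rcases k.eq_zero_or_pos with rfl | hk
  · exact hx
  · exact h.iterate_mem_of_pos hl x hk

lemma iterate_le (h : IsEVIResolvent D g J) (hl : 0 < l) (hx : x ∈ D) (k : ℕ) :
    g ((J l)^[k] x) ≤ g x := by
  induction k with
  | zero => exact le_rfl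
  | succ k ih =>
    rw [Function.iterate_succ_apply']
    exact (h.apply_le hl (h.iterate_mem hl hx k)).trans ih

lemma antitone_dist_iterate (h : IsEVIResolvent D g J) (hl : 0 < l) (x : H) (hm : m ∈ D)
    (hmin : ∀ y ∈ D, g m ≤ g y) : Antitone fun k => dist ((J l)^[k] x) m :=
  antitone_nat_of_succ_le fun k => by
    rw [Function.iterate_succ_apply']
    exact h.dist_apply_le hl _ hm hmin

lemma evi_iterate (h : IsEVIResolvent D g J) (hl : 0 < l) (x : H) {y : H} (hy : y ∈ D) (k : ℕ) :
    dist ((J l)^[k] x) y ^ 2 + 2 * (k * l) * (g ((J l)^[k] x) - g y) ≤ dist x y ^ 2 := by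
  induction k with
  | zero => simp
  | succ k ih =>
    have hstep := h.evi l hl ((J l)^[k] x) y hy
    have hdecr : k * l * g (J l ((J l)^[k] x)) ≤ k * l * g ((J l)^[k] x) := by
      rcases k.eq_zero_or_pos with rfl | hk
      · simp
      · gcongr
        exact h.apply_le hl (h.iterate_mem_of_pos hl x hk)
    rw [Function.iterate_succ_apply']
    push_cast
    linarith [sq_nonneg (dist ((J l)^[k] x) (J l ((J l)^[k] x)))]

section Discretization

variable {l' : ℝ}

lemma dist_apply_iterate_sq_le (h : IsEVIResolvent D g J) (hl : 0 < l) (hl' : 0 < l') (hx : x ∈ D)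
    {y : H} (hy : y ∈ D) (M : ℕ) :
    dist (J l x) ((J l')^[M] y) ^ 2 ≤ dist x y ^ 2 + 2 * l * (g x - g (J l x)) +
      2 * ((l - M * l') * (g ((J l')^[M] y) - g x)) := by
  have hxy := h.evi l hl x _ (h.iterate_mem hl' hy M)
  have hyx := h.evi_iterate hl' y hx M
  rw [dist_comm _ x, dist_comm y x] at hyx
  linarith [sq_nonneg (dist x (J l x))]

lemma dist_iterate_iterate_sq_le (h : IsEVIResolvent D g J) (hb : ∀ y ∈ D, b ≤ g y) (hl : 0 < l)
    (hl' : 0 < l') (hx : x ∈ D) (M k : ℕ) :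
    dist ((J l)^[k] x) ((J l')^[M * k] x) ^ 2 ≤ 2 * (l + k * |l - M * l'|) * (g x - b) := by
  -- The summands `g X - g (J l X)` of successive steps telescope.
  have htele : dist ((J l)^[k] x) ((J l')^[M * k] x) ^ 2 ≤
      2 * l * (g x - g ((J l)^[k] x)) + 2 * (k * |l - M * l'|) * (g x - b) := by
    induction k with
    | zero => simp
    | succ k ih =>
      have hX := h.iterate_mem hl hx k
      have hY := h.iterate_mem hl' hx (M * k)
      have hstep := h.dist_apply_iterate_sq_le hl hl' hX hY M
      rw [← Function.iterate_succ_apply' (J l), ← Function.iterate_add_apply, ← add_comm (M * k),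
        ← Nat.mul_succ] at hstep
      have herror : (l - M * l') * (g ((J l')^[M * (k + 1)] x) - g ((J l)^[k] x)) ≤
          |l - M * l'| * (g x - b) := by
        refine (le_abs_self _).trans ?_
        rw [abs_mul]
        gcongr
        exact abs_sub_le_of_le_of_le (hb _ (h.iterate_mem hl' hx _)) (h.iterate_le hl' hx _)
          (hb _ hX) (h.iterate_le hl hx k)
      push_cast
      linarith
  have hbound : 2 * l * (g x - g ((J l)^[k] x)) ≤ 2 * l * (g x - b) := by
    gcongr
    exact hb _ (h.iterate_mem hl hx k)
  linarith

lemma dist_iterate_refine_sq_le (h : IsEVIResolvent D g J) (hb : ∀ y ∈ D, b ≤ g y) (ht : 0 < t)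
    (hx : x ∈ D) {n M : ℕ} (hn : 0 < n) (hM : 0 < M) :
    dist ((J (t / n))^[n] x) ((J (t / (M * n : ℕ)))^[M * n] x) ^ 2 ≤
      2 * (t / n) * (g x - b) := by
  have hsteps : t / n - M * (t / (M * n : ℕ)) = 0 := by
    push_cast
    field_simp
    ring
  have hdist := h.dist_iterate_iterate_sq_le hb (l := t / n) (l' := t / (M * n : ℕ))
    (by positivity) (by positivity) hx M n
  rwa [hsteps, abs_zero, mul_zero, add_zero] at hdist

end Discretization

lemma cauchySeq_iterate_of_mem (h : IsEVIResolvent D g J) (hb : ∀ y ∈ D, b ≤ g y) (ht : 0 < t)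
    (hx : x ∈ D) : CauchySeq fun n : ℕ => (J (t / n))^[n] x := by
  have hlim : Tendsto (fun n : ℕ => 2 * (t / n) * (g x - b)) atTop (𝓝 0) := by
    simpa using ((tendsto_const_div_atTop_nhds_zero_nat t).const_mul 2).mul_const (g x - b)
  rw [Metric.cauchySeq_iff]
  intro ε hε
  obtain ⟨N, hN⟩ := eventually_atTop.1 (hlim.eventually_lt_const (by positivity : 0 < (ε / 2) ^ 2))
  have hclose : ∀ n M : ℕ, N < n → 0 < M →
      dist ((J (t / n))^[n] x) ((J (t / (M * n : ℕ)))^[M * n] x) < ε / 2 := fun n M hn hM =>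
    lt_of_pow_lt_pow_left₀ 2 (by positivity)
      ((h.dist_iterate_refine_sq_le hb ht hx (by omega) hM).trans_lt (hN n hn.le))
  refine ⟨N + 1, fun i hi j hj => ?_⟩
  have hij := hclose i j hi (by omega)
  have hji := hclose j i hj (by omega)
  rw [mul_comm i j] at hji
  exact (dist_triangle_right _ _ _).trans_lt ((add_lt_add hij hji).trans_eq (add_halves ε))

lemma exists_isGradientFlowPt [CompleteSpace H] (h : IsEVIResolvent D g J)
    (hJ : ∀ l > 0, LipschitzWith 1 (J l)) (hb : ∀ y ∈ D, b ≤ g y) (ht : 0 < t)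
    (hx : x ∈ closure D) : ∃ y, IsGradientFlowPt J t x y :=
  cauchySeq_tendsto_of_complete <| cauchySeq_of_mem_closure (lipschitzWith_one_iterate_div hJ ht)
    (fun _ hx' => h.cauchySeq_iterate_of_mem hb ht hx') hx

lemma dist_flow_sq_le (h : IsEVIResolvent D g J) (hb : ∀ y ∈ D, b ≤ g y) {s : ℝ} (hs : 0 < s)
    (ht : 0 < t) (hx : x ∈ D) {y z : H} (hy : IsGradientFlowPt J s x y)
    (hz : IsGradientFlowPt J t x z) : dist y z ^ 2 ≤ 2 * |s - t| * (g x - b) := by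
  have hlim : Tendsto (fun n : ℕ => 2 * (s / n + |s - t|) * (g x - b)) atTop
      (𝓝 (2 * (0 + |s - t|) * (g x - b))) :=
    (((tendsto_const_div_atTop_nhds_zero_nat s).add_const _).const_mul 2).mul_const _
  rw [zero_add] at hlim
  refine le_of_tendsto_of_tendsto ((hy.dist hz).pow 2) hlim ?_
  filter_upwards [eventually_gt_atTop 0] with n hn
  have hn' : (0 : ℝ) < n := Nat.cast_pos.2 hn
  have hsteps : n * |s / n - (1 : ℕ) * (t / n)| = |s - t| := by
    rw [Nat.cast_one, one_mul, ← sub_div, abs_div, abs_of_pos hn', mul_div_cancel₀ _ hn'.ne']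
  have hdist := h.dist_iterate_iterate_sq_le hb (div_pos hs hn') (div_pos ht hn') hx 1 n
  rwa [hsteps, one_mul] at hdist

lemma tendsto_flow_of_tendsto (h : IsEVIResolvent D g J) (hb : ∀ y ∈ D, b ≤ g y) {s : ℕ → ℝ}
    (hs : ∀ n, 0 < s n) (ht : 0 < t) (hst : Tendsto s atTop (𝓝 t)) (hx : x ∈ D) {y : ℕ → H} {z : H}
    (hy : ∀ n, IsGradientFlowPt J (s n) x (y n)) (hz : IsGradientFlowPt J t x z) :
    Tendsto y atTop (𝓝 z) := by
  have hbound : Tendsto (fun n => √(2 * |s n - t| * (g x - b))) atTop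
      (𝓝 √(2 * |t - t| * (g x - b))) :=
    (((hst.sub_const t).abs.const_mul 2).mul_const _).sqrt
  rw [sub_self, abs_zero, mul_zero, zero_mul, Real.sqrt_zero] at hbound
  exact tendsto_iff_dist_tendsto_zero.2 <| squeeze_zero (fun _ => dist_nonneg)
    (fun n => Real.le_sqrt_of_sq_le (h.dist_flow_sq_le hb (hs n) ht hx (hy n) hz)) hbound

section Minimizer

variable {s : ℝ} {y z : H}

lemma dist_flow_le_of_nat_mul (h : IsEVIResolvent D g J) {τ : ℝ} (hτ : 0 < τ) {j k : ℕ}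
    (hj : 0 < j) (hjk : j ≤ k) (hy : IsGradientFlowPt J (j * τ) x y)
    (hz : IsGradientFlowPt J (k * τ) x z) (hm : m ∈ D) (hmin : ∀ y ∈ D, g m ≤ g y) :
    dist z m ≤ dist y m := by
  refine le_of_tendsto_of_tendsto ((hz.tendsto_iterate_mul (hj.trans_le hjk)).dist
    tendsto_const_nhds) ((hy.tendsto_iterate_mul hj).dist tendsto_const_nhds) ?_
  filter_upwards [eventually_gt_atTop 0] with n hn
  exact h.antitone_dist_iterate (by positivity) x hm hmin (Nat.mul_le_mul_right n hjk)

lemma dist_flow_le_of_mem [CompleteSpace H] (h : IsEVIResolvent D g J)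
    (hJ : ∀ l > 0, LipschitzWith 1 (J l)) (hs : 0 < s) (hst : s ≤ t) (hx : x ∈ D)
    (hy : IsGradientFlowPt J s x y) (hz : IsGradientFlowPt J t x z) (hm : m ∈ D)
    (hmin : ∀ y ∈ D, g m ≤ g y) : dist z m ≤ dist y m := by
  -- Approximate `t` by multiples of `s / (n + 1)`, for which the two flows share their step sizes.
  let k : ℕ → ℕ := fun n => ⌈t / s * (n + 1 : ℕ)⌉₊
  let τ : ℕ → ℝ := fun n => s / (n + 1 : ℕ)
  have hτ : ∀ n, 0 < τ n := fun n => by positivity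
  have hk : ∀ n, n + 1 ≤ k n := fun n => by
    have : ((n + 1 : ℕ) : ℝ) ≤ k n :=
      (le_mul_of_one_le_left (by positivity) ((one_le_div hs).2 hst)).trans (Nat.le_ceil _)
    exact_mod_cast this
  have hkpos : ∀ n, 0 < k n := fun n => n.succ_pos.trans_le (hk n)
  have hkτ : Tendsto (fun n => k n * τ n) atTop (𝓝 t) := by
    have hceil := ((tendsto_nat_ceil_mul_div_atTop (div_nonneg (hs.le.trans hst) hs.le)).comp
      (tendsto_natCast_atTop_atTop.comp (tendsto_add_atTop_nat 1))).mul_const s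
    rw [div_mul_cancel₀ _ hs.ne'] at hceil
    exact hceil.congr fun n => by simp only [Function.comp_apply, k, τ]; ring
  have hkτpos : ∀ n, 0 < k n * τ n := fun n => mul_pos (Nat.cast_pos.2 (hkpos n)) (hτ n)
  choose w hw using fun n => h.exists_isGradientFlowPt hJ hmin (hkτpos n) (subset_closure hx)
  have hwz : Tendsto w atTop (𝓝 z) :=
    h.tendsto_flow_of_tendsto hmin hkτpos (hs.trans_le hst) hkτ hx hw hz
  refine le_of_tendsto' (hwz.dist tendsto_const_nhds) fun n => ?_
  have hy' : IsGradientFlowPt J ((n + 1 : ℕ) * τ n) x y := by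
    rwa [show (n + 1 : ℕ) * τ n = s from mul_div_cancel₀ s (Nat.cast_ne_zero.2 n.succ_ne_zero)]
  exact h.dist_flow_le_of_nat_mul (hτ n) n.succ_pos (hk n) hy' (hw n) hm hmin

lemma dist_flow_le [CompleteSpace H] (h : IsEVIResolvent D g J)
    (hJ : ∀ l > 0, LipschitzWith 1 (J l)) (hs : 0 < s) (hst : s ≤ t) (hx : x ∈ closure D)
    (hy : IsGradientFlowPt J s x y) (hz : IsGradientFlowPt J t x z) (hm : m ∈ D)
    (hmin : ∀ y ∈ D, g m ≤ g y) : dist z m ≤ dist y m := by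
  have ht : 0 < t := hs.trans_le hst
  obtain ⟨x', hx'D, hx'⟩ := mem_closure_iff_seq_limit.1 hx
  choose y' hy' using fun n => h.exists_isGradientFlowPt hJ hmin hs (subset_closure (hx'D n))
  choose z' hz' using fun n => h.exists_isGradientFlowPt hJ hmin ht (subset_closure (hx'D n))
  have hyy' := IsGradientFlowPt.tendsto_of_tendsto hJ hs hx' hy' hy
  have hzz' := IsGradientFlowPt.tendsto_of_tendsto hJ ht hx' hz' hz
  exact le_of_tendsto_of_tendsto' (hzz'.dist tendsto_const_nhds) (hyy'.dist tendsto_const_nhds)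
    fun n => h.dist_flow_le_of_mem hJ hs hst (hx'D n) (hy' n) (hz' n) hm hmin

lemma exists_tendsto_dist_flow [CompleteSpace H] (h : IsEVIResolvent D g J)
    (hJ : ∀ l > 0, LipschitzWith 1 (J l)) (hx : x ∈ closure D) {u : ℝ → H}
    (hu : ∀ t > 0, IsGradientFlowPt J t x (u t)) (hm : m ∈ D) (hmin : ∀ y ∈ D, g m ≤ g y) :
    ∃ r, Tendsto (fun t => dist m (u t)) atTop (𝓝 r) := by
  have hpos : ∀ t : ℝ, 0 < max t 1 := fun t => lt_max_of_lt_right one_pos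
  have hanti : Antitone fun t : ℝ => dist m (u (max t 1)) := fun s t hst => by
    simp only [dist_comm m]
    exact h.dist_flow_le hJ (hpos s) (max_le_max_right 1 hst) hx (hu _ (hpos s)) (hu _ (hpos t))
      hm hmin
  refine ⟨_, (tendsto_atTop_ciInf hanti
    ⟨0, Set.forall_mem_range.2 fun _ => dist_nonneg⟩).congr' ?_⟩
  filter_upwards [eventually_ge_atTop 1] with t ht
  rw [max_eq_left ht]

lemma flow_mem_closure_sublevel (h : IsEVIResolvent D g J) (ht : 0 < t)
    (hy : IsGradientFlowPt J t x y) (hm : m ∈ D) :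
    y ∈ closure {p ∈ D | g p ≤ g m + dist x m ^ 2 / (2 * t)} := by
  refine mem_closure_of_tendsto hy ?_
  filter_upwards [eventually_gt_atTop 0] with n hn
  have hl : 0 < t / n := by positivity
  refine ⟨h.iterate_mem_of_pos hl x hn, ?_⟩
  have hevi := h.evi_iterate hl x hm n
  rw [mul_div_cancel₀ t (by positivity)] at hevi
  rw [← sub_le_iff_le_add', le_div_iff₀ (by positivity)]
  linarith [sq_nonneg (dist ((J (t / n))^[n] x) m)]

end Minimizer

lemma evi_of_mem_closure_sublevel (h : IsEVIResolvent D g J) (hl : 0 < l) (x : H) {a : ℝ} {y : H}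
    (hy : y ∈ closure {p ∈ D | g p ≤ a}) :
    dist (J l x) y ^ 2 + dist x (J l x) ^ 2 + 2 * l * (g (J l x) - a) ≤ dist x y ^ 2 := by
  have hsub : {p ∈ D | g p ≤ a} ⊆ {q | dist (J l x) q ^ 2 + dist x (J l x) ^ 2 +
      2 * l * (g (J l x) - a) ≤ dist x q ^ 2} := fun p ⟨hpD, hpa⟩ => by
    have : 2 * l * (g (J l x) - a) ≤ 2 * l * (g (J l x) - g p) := by gcongr
    exact (add_le_add_right this _).trans (h.evi l hl x p hpD)
  exact closure_minimal hsub (isClosed_le (by fun_prop) (by fun_prop)) hy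

lemma mem_and_eq_of_isAsymptoticCenter (h : IsEVIResolvent D g J) (hb : ∀ y ∈ D, b ≤ g y)
    {u : ℕ → H} (hu : Bornology.IsBounded (Set.range u)) {a : ℕ → ℝ} (ha : Tendsto a atTop (𝓝 b))
    (hua : ∀ᶠ n in atTop, u n ∈ closure {p ∈ D | g p ≤ a n}) {c : H}
    (hc : IsAsymptoticCenter u c) : c ∈ D ∧ g c = b := by
  have hpD := h.mem 1 one_pos c
  have hpb := hb _ hpD
  set p := J 1 c
  have hle : asymptoticFun u p ≤ asymptoticFun u c - dist c p ^ 2 - 2 * (g p - b) := by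
    refine (asymptoticFun_le_iff hu).2 fun r hr => ?_
    have hε := sub_pos.2 hr
    filter_upwards [hua, eventually_dist_sq_lt (y := c) hu (lt_add_of_pos_right _ (half_pos hε)),
      ha.eventually_lt_const (lt_add_of_pos_right b (div_pos hε four_pos))] with n hn hcn han
    linarith [h.evi_of_mem_closure_sublevel one_pos c hn]
  have hcp : asymptoticFun u c ≤ asymptoticFun u p := hc p
  have hdist : dist c p = 0 := pow_eq_zero_iff two_ne_zero |>.1 <|
    le_antisymm (by linarith) (sq_nonneg _)
  rw [dist_eq_zero.1 hdist]
  exact ⟨hpD, by linarith [sq_nonneg (dist c p)]⟩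

theorem exists_forall_weakConvSeq_flow [CompleteSpace H] (h : IsEVIResolvent D g J)
    (hH : HadamardSpace H) (hm : m ∈ D) (hmin : ∀ y ∈ D, g m ≤ g y) (hx : x ∈ closure D)
    {u : ℝ → H} (hu : ∀ t > 0, IsGradientFlowPt J t x (u t)) :
    ∃ c, (c ∈ D ∧ g c = g m) ∧ ∀ s : ℕ → ℝ, Tendsto s atTop atTop →
      Bornology.IsBounded (Set.range (u ∘ s)) ∧ WeakConvSeq (u ∘ s) c := by
  have hJ : ∀ l > 0, LipschitzWith 1 (J l) := fun l hl => h.lipschitzWith_one hH hl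
  have hlim : ∀ z, z ∈ D ∧ g z = g m → ∃ r, Tendsto (fun t => dist z (u t)) atTop (𝓝 r) :=
    fun z hz => h.exists_tendsto_dist_flow hJ hx hu hz.1 (hz.2 ▸ hmin)
  refine hH.exists_forall_weakConvSeq_of_tendsto_dist (F := {c | c ∈ D ∧ g c = g m})
    ⟨m, hm, rfl⟩ hlim fun s hs c hc => ?_
  obtain ⟨r, hr⟩ := hlim m ⟨hm, rfl⟩
  have ha : Tendsto (fun n => g m + dist x m ^ 2 / (2 * s n)) atTop (𝓝 (g m)) := by
    simpa using ((hs.const_mul_atTop two_pos).const_div_atTop (dist x m ^ 2)).const_add (g m)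
  refine h.mem_and_eq_of_isAsymptoticCenter hmin (isBounded_range_of_tendsto_dist (hr.comp hs)) ha
    ?_ hc
  filter_upwards [hs.eventually_gt_atTop 0] with n hn
  exact h.flow_mem_closure_sublevel hn (hu _ hn) hm

end IsEVIResolvent

section Resolvent

variable {H : Type*} [MetricSpace H] {f : H → EReal}

lemma ConvexFun.toReal_le (hconv : ConvexFun f) (hbot : ∀ x, f x ≠ ⊥) {γ : ℝ → H}
    (hγ : IsGeodesic γ) (h0 : f (γ 0) ≠ ⊤) (h1 : f (γ 1) ≠ ⊤) {τ : ℝ} (hτ : τ ∈ Set.Icc (0 : ℝ) 1) :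
    f (γ τ) ≠ ⊤ ∧ (f (γ τ)).toReal ≤ (1 - τ) * (f (γ 0)).toReal + τ * (f (γ 1)).toReal := by
  have hle := hconv γ hγ τ hτ
  rw [← EReal.coe_toReal h0 (hbot _), ← EReal.coe_toReal h1 (hbot _)] at hle
  norm_cast at hle
  have htop : f (γ τ) ≠ ⊤ := (hle.trans_lt (EReal.coe_lt_top _)).ne
  rw [← EReal.coe_toReal htop (hbot _), EReal.coe_le_coe_iff] at hle
  exact ⟨htop, hle⟩

namespace IsResolventPt

variable {l : ℝ} {x p y : H}

lemma ne_top (h : IsResolventPt f l x p) (hy : f y ≠ ⊤) : f p ≠ ⊤ := fun htop => by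
  have hle := h y
  rw [htop, EReal.top_add_coe, top_le_iff] at hle
  exact EReal.add_ne_top hy (EReal.coe_ne_top _) hle

lemma toReal_add_le (h : IsResolventPt f l x p) (hl : 0 < l) (hbot : ∀ x, f x ≠ ⊥)
    (hy : f y ≠ ⊤) :
    2 * l * (f p).toReal + dist x p ^ 2 ≤ 2 * l * (f y).toReal + dist x y ^ 2 := by
  have hle := h y
  rw [← EReal.coe_toReal (h.ne_top hy) (hbot p), ← EReal.coe_toReal hy (hbot y)] at hle
  norm_cast at hle
  have hmul := mul_le_mul_of_nonneg_left hle (by positivity : 0 ≤ 2 * l)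
  rwa [mul_add, mul_add, mul_div_cancel₀ _ (by positivity),
    mul_div_cancel₀ _ (by positivity)] at hmul

lemma evi [CompleteSpace H] (h : IsResolventPt f l x p) (hH : HadamardSpace H) (hl : 0 < l)
    (hbot : ∀ x, f x ≠ ⊥) (hconv : ConvexFun f) (hy : f y ≠ ⊤) :
    dist p y ^ 2 + dist x p ^ 2 + 2 * l * ((f p).toReal - (f y).toReal) ≤ dist x y ^ 2 := by
  obtain ⟨γ, hγ, rfl, rfl⟩ := hH.geodesic p y
  set p := γ 0
  set y := γ 1
  -- Compare `p` with `γ τ`, divide by `τ` and let `τ` tend to `0`.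
  have hsegment : ∀ τ ∈ Set.Ioc (0 : ℝ) 1, (1 - τ) * dist p y ^ 2 ≤
      dist x y ^ 2 - dist x p ^ 2 - 2 * l * ((f p).toReal - (f y).toReal) := fun τ hτ => by
    obtain ⟨hτtop, hfτ⟩ := hconv.toReal_le hbot hγ (h.ne_top hy) hy (Set.Ioc_subset_Icc_self hτ)
    have hmin := h.toReal_add_le hl hbot hτtop
    have hcat := hH.cat0 x γ hγ τ (Set.Ioc_subset_Icc_self hτ)
    have hfτ' := mul_le_mul_of_nonneg_left hfτ (by positivity : 0 ≤ 2 * l)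
    refine le_of_mul_le_mul_left ?_ hτ.1
    linarith
  have hlim : Tendsto (fun τ : ℝ => (1 - τ) * dist p y ^ 2) (𝓝[>] 0) (𝓝 (dist p y ^ 2)) := by
    have hcont : Continuous fun τ : ℝ => (1 - τ) * dist p y ^ 2 := by fun_prop
    simpa using (hcont.tendsto 0).mono_left nhdsWithin_le_nhds
  have hle := le_of_tendsto hlim (mem_of_superset (Ioc_mem_nhdsGT one_pos) hsegment)
  linarith

end IsResolventPt

lemma HadamardSpace.isEVIResolvent [CompleteSpace H] (hH : HadamardSpace H)
    (hbot : ∀ x, f x ≠ ⊥) (hconv : ConvexFun f) {m : H} (hm : f m ≠ ⊤) {J : ℝ → H → H}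
    (hJ : ∀ l > 0, ∀ x, IsResolventPt f l x (J l x)) :
    IsEVIResolvent {y | f y ≠ ⊤} (fun y => (f y).toReal) J where
  mem l hl x := (hJ l hl x).ne_top hm
  evi l hl x _ hy := (hJ l hl x).evi hH hl hbot hconv hy

end Resolvent

theorem gradient_flow_weak_convergence_general
    {H : Type*} [MetricSpace H] [CompleteSpace H] (hH : HadamardSpace H)
    (f : H → EReal) (hbot : ∀ x, f x ≠ ⊥) (hconv : ConvexFun f)
    (hmin : ∃ m : H, ∀ y : H, f m ≤ f y)
    (J : ℝ → H → H) (hJ : ∀ l > 0, ∀ x : H, IsResolventPt f l x (J l x))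
    (S : ℝ → H → H) (hS : ∀ t > 0, ∀ x y : H, IsGradientFlowPt J t x y → S t x = y)
    (x : H) (hx : x ∈ closure {y : H | f y ≠ ⊤}) :
    ∃ m : H, (∀ y : H, f m ≤ f y) ∧
      ∀ ts : ℕ → ℝ, Tendsto ts atTop atTop →
        Bornology.IsBounded (Set.range fun n => S (ts n) x) ∧
        WeakConvSeq (fun n => S (ts n) x) m := by
  obtain ⟨x₀, hx₀⟩ := closure_nonempty_iff.1 ⟨x, hx⟩
  obtain ⟨m, hm⟩ := hmin
  have hmtop : f m ≠ ⊤ := ((hm x₀).trans_lt (lt_top_iff_ne_top.2 hx₀)).ne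
  have hmin' : ∀ y, f y ≠ ⊤ → (f m).toReal ≤ (f y).toReal := fun y hy =>
    EReal.toReal_le_toReal (hm y) (hbot m) hy
  have hevi := hH.isEVIResolvent hbot hconv hmtop hJ
  have hflow : ∀ t > 0, IsGradientFlowPt J t x (S t x) := fun t ht => by
    obtain ⟨y, hy⟩ := hevi.exists_isGradientFlowPt (fun l => hevi.lipschitzWith_one hH) hmin' ht hx
    rwa [hS t ht x y hy]
  obtain ⟨c, ⟨hctop, hcm⟩, hweak⟩ := hevi.exists_forall_weakConvSeq_flow hH hmtop hmin' hx hflow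
  have hfc : f c = f m := (EReal.toReal_eq_toReal hctop (hbot c) hmtop (hbot m)).1 hcm
  exact ⟨c, hfc ▸ hm, hweak⟩

/-- If a proper convex lsc function on a Hadamard space attains its minimum,
then for every starting point in the closure of its domain the gradient flow weakly converges,
as `t → ∞`, to a minimizer of `f`. -/
theorem gradient_flow_weak_convergence
    {H : Type*} [MetricSpace H] [CompleteSpace H] (hH : HadamardSpace H)
    (f : H → EReal) (hf : ProperConvexLsc f)
    (hmin : ∃ m : H, ∀ y : H, f m ≤ f y)
    (J : ℝ → H → H) (hJ : ∀ lam > (0:ℝ), ∀ x : H, IsResolventPt f lam x (J lam x))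
    (S : ℝ → H → H) (hS : ∀ t > (0:ℝ), ∀ x y : H, IsGradientFlowPt J t x y → S t x = y)
    (x : H) (hx : x ∈ closure {y : H | f y ≠ ⊤}) :
    ∃ m : H, (∀ y : H, f m ≤ f y) ∧
      ∀ ts : ℕ → ℝ, (∀ n, 0 < ts n) → Tendsto ts atTop atTop →
        Bornology.IsBounded (Set.range fun n => S (ts n) x) ∧
        WeakConvSeq (fun n => S (ts n) x) m := by
  obtain ⟨-, hbot, hconv, -⟩ := hf
  obtain ⟨m, hm, hweak⟩ :=
    gradient_flow_weak_convergence_general hH f hbot hconv hmin J hJ S hS x hx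
  exact ⟨m, hm, fun ts _ => hweak ts⟩
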